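/- Fix an integer d ≥ 4 and set β = d/2 − 2. There exist a constant c > 0 and an integer N such that for all n ≥ N: Var(f₀(Qₙ)) ≤ c·(log n)^{3 − 1/(d−1)}·n^{1/(d−1)}, where Qₙ is the convex hull of n i.i.d. points with law μ_β and f₀(Qₙ) is its number of extreme points. -/

import Mathlib

open MeasureTheory

/-- The `β`-distribution on the closed unit disk of `ℝ²`. -/
noncomputable def betaMeasure (β : ℝ) : Measure (EuclideanSpace ℝ (Fin 2)) :=
  volume.withDensity fun x =>
    ENNReal.ofReal (if ‖x‖ ≤ 1 then (β + 1) / Real.pi * (1 - ‖x‖ ^ 2) ^ β else 0)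

instance (β : ℝ) : SigmaFinite (betaMeasure β) :=
  SigmaFinite.withDensity_ofReal _

/-- The joint law of `n` i.i.d. points with law `μ_β`, realized on `(ℝ²)ⁿ`. -/
noncomputable def betaPi (β : ℝ) (n : ℕ) :
    Measure (Fin n → EuclideanSpace ℝ (Fin 2)) :=
  Measure.pi fun _ => betaMeasure β

/-- The number of vertices (extreme points) of the convex hull `Qₙ`, as a real. -/
noncomputable def vertCount {n : ℕ} (ω : Fin n → EuclideanSpace ℝ (Fin 2)) : ℝ :=
  Nat.card (Set.extremePoints ℝ (convexHull ℝ (Set.range ω)))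

/-- `E[f₀(Qₙ)]`. -/
noncomputable def meanF0 (β : ℝ) (n : ℕ) : ℝ :=
  ∫ ω, vertCount ω ∂ betaPi β n

/-- `Var(f₀(Qₙ)) = E[f₀(Qₙ)²] - (E[f₀(Qₙ)])²`. -/
noncomputable def varF0 (β : ℝ) (n : ℕ) : ℝ :=
  (∫ ω, vertCount ω ^ 2 ∂ betaPi β n) - meanF0 β n ^ 2




lemma es_int {X : Type*} [MeasurableSpace X] {μ : Measure X} [IsProbabilityMeasure μ]
    {f : X → ℝ} (hf : Measurable f) {C : ℝ} (hC : ∀ x, |f x| ≤ C) : Integrable f μ :=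
  Integrable.of_bound hf.aestronglyMeasurable C (Filter.Eventually.of_forall fun x => by
    simpa using hC x)

lemma es_int_sq {X : Type*} [MeasurableSpace X] {μ : Measure X} [IsProbabilityMeasure μ]
    {f : X → ℝ} (hf : Measurable f) {C : ℝ} (hC : ∀ x, |f x| ≤ C) :
    Integrable (fun x => f x ^ 2) μ :=
  es_int (hf.pow_const 2) (C := C ^ 2) fun x => by
    rw [abs_pow]; exact pow_le_pow_left₀ (abs_nonneg _) (hC x) 2

lemma es_const {X : Type*} [MeasurableSpace X] {μ : Measure X} [IsProbabilityMeasure μ]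
    {f : X → ℝ} (hf : Measurable f) {C : ℝ} (hC : ∀ x, |f x| ≤ C) (g : ℝ) :
    ∫ x, f x ^ 2 ∂μ - (∫ x, f x ∂μ) ^ 2 ≤ ∫ x, (f x - g) ^ 2 ∂μ := by
  have h1 : ∫ x, (f x - g) ^ 2 ∂μ = ∫ x, f x ^ 2 ∂μ - 2 * g * ∫ x, f x ∂μ + g ^ 2 := by
    have : ∀ x, (f x - g) ^ 2 = f x ^ 2 - 2 * g * f x + g ^ 2 := fun x => by ring
    simp_rw [this]
    rw [integral_add, integral_sub, integral_const_mul]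
    · simp
    · exact es_int_sq hf hC
    · exact (es_int hf hC).const_mul _
    · exact (es_int_sq hf hC).sub ((es_int hf hC).const_mul _)
    · exact integrable_const _
  nlinarith [sq_nonneg (∫ x, f x ∂μ - g)]

lemma es_jensen {X : Type*} [MeasurableSpace X] {μ : Measure X} [IsProbabilityMeasure μ]
    {f : X → ℝ} (hf : Measurable f) {C : ℝ} (hC : ∀ x, |f x| ≤ C) :
    (∫ x, f x ∂μ) ^ 2 ≤ ∫ x, f x ^ 2 ∂μ := by
  set g := ∫ x, f x ∂μ with hg
  have h0 : 0 ≤ ∫ x, (f x - g) ^ 2 ∂μ := integral_nonneg fun x => sq_nonneg _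
  have h1 : ∫ x, (f x - g) ^ 2 ∂μ = ∫ x, f x ^ 2 ∂μ - 2 * g * ∫ x, f x ∂μ + g ^ 2 := by
    have : ∀ x, (f x - g) ^ 2 = f x ^ 2 - 2 * g * f x + g ^ 2 := fun x => by ring
    simp_rw [this]
    rw [integral_add, integral_sub, integral_const_mul]
    · simp
    · exact es_int_sq hf hC
    · exact (es_int hf hC).const_mul _
    · exact (es_int_sq hf hC).sub ((es_int hf hC).const_mul _)
    · exact integrable_const _
  rw [← hg] at h1
  nlinarith

lemma es_abs_int {X : Type*} [MeasurableSpace X] {μ : Measure X} [IsProbabilityMeasure μ]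
    {f : X → ℝ} {C : ℝ} (hC : ∀ x, |f x| ≤ C) : |∫ x, f x ∂μ| ≤ C := by
  have := norm_integral_le_of_norm_le_const (μ := μ) (f := f) (C := C)
    (Filter.Eventually.of_forall fun x => by simpa using hC x)
  simpa using this

lemma es_prod {X Y : Type*} [MeasurableSpace X] [MeasurableSpace Y] {μ : Measure X}
    {ν : Measure Y} [IsProbabilityMeasure μ] [IsProbabilityMeasure ν]
    {F : X × Y → ℝ} (hF : Measurable F) {C : ℝ} (hC : ∀ x, |F x| ≤ C)
    {G : Y → ℝ} (hG : Measurable G) (hCG : ∀ y, |G y| ≤ C) :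
    ∫ z, F z ^ 2 ∂(μ.prod ν) - (∫ z, F z ∂(μ.prod ν)) ^ 2 ≤
      ∫ z, (F z - G z.2) ^ 2 ∂(μ.prod ν) +
      ∫ x, (∫ y, F (x, y) ^ 2 ∂ν - (∫ y, F (x, y) ∂ν) ^ 2) ∂μ := by
  have hFG : Measurable fun z : X × Y => F z - G z.2 := hF.sub (hG.comp measurable_snd)
  have hCFG : ∀ z : X × Y, |F z - G z.2| ≤ C + C := fun z =>
    (abs_sub _ _).trans (add_le_add (hC z) (hCG z.2))
  have i1 := es_int_sq (μ := μ.prod ν) hF hC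
  have i2 := es_int (μ := μ.prod ν) hF hC
  have i3 := es_int_sq (μ := μ.prod ν) hFG hCFG
  have hm : Measurable fun x => ∫ y, F (x, y) ∂ν :=
    (hF.stronglyMeasurable.integral_prod_right' (ν := ν)).measurable
  have hmC : ∀ x, |∫ y, F (x, y) ∂ν| ≤ C := fun x => es_abs_int fun y => hC _
  rw [integral_prod _ i1, integral_prod _ i2, integral_prod _ i3]
  rw [integral_sub i1.integral_prod_left (es_int_sq hm hmC)]
  have h1 := es_const (μ := μ) hm hmC (∫ y, G y ∂ν)
  have h2 : ∫ x, (∫ y, F (x, y) ∂ν - ∫ y, G y ∂ν) ^ 2 ∂μ ≤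
      ∫ x, ∫ y, (F (x, y) - G y) ^ 2 ∂ν ∂μ := by
    refine integral_mono (es_int_sq (C := C + C) (hm.sub_const _) fun x =>
      (abs_sub _ _).trans (add_le_add (hmC x) (es_abs_int hCG))) i3.integral_prod_left ?_
    intro x
    have hFx : Measurable fun y => F (x, y) := hF.comp measurable_prodMk_left
    simp only
    rw [← integral_sub (es_int hFx fun y => hC _) (es_int hG hCG)]
    exact es_jensen (C := C + C) (hFx.sub hG) fun y => hCFG (x, y)
  linarith

theorem efron_stein {X : Type*} [MeasurableSpace X] (μ : Measure X) [IsProbabilityMeasure μ]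
    (n : ℕ) (f : (Fin n → X) → ℝ) (hf : Measurable f) (C : ℝ) (hC : ∀ ω, |f ω| ≤ C)
    (g : Fin n → (Fin n → X) → ℝ) (hg : ∀ k, Measurable (g k)) (hgC : ∀ k ω, |g k ω| ≤ C)
    (hgu : ∀ k ω x, g k (Function.update ω k x) = g k ω) :
    ∫ ω, f ω ^ 2 ∂(Measure.pi fun _ => μ) - (∫ ω, f ω ∂(Measure.pi fun _ => μ)) ^ 2 ≤
      ∑ k, ∫ ω, (f ω - g k ω) ^ 2 ∂(Measure.pi fun _ => μ) := by
  induction n with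
  | zero =>
    simp [Measure.pi_of_empty (fun _ : Fin 0 => μ)]
  | succ n ih =>
    have mp := (measurePreserving_piFinSuccAbove (fun _ : Fin (n+1) => μ) 0).symm
    set e := (MeasurableEquiv.piFinSuccAbove (fun _ : Fin (n+1) => X) 0).symm with he
    have hei : ∀ x y, e (x, y) = Fin.cons x y := fun x y => by
      simp [he, MeasurableEquiv.piFinSuccAbove]; rfl
    have tr : ∀ φ : (Fin (n+1) → X) → ℝ, ∫ ω, φ ω ∂(Measure.pi fun _ => μ) =
        ∫ z, φ (e z) ∂(μ.prod (Measure.pi fun _ : Fin n => μ)) := fun φ =>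
      (mp.integral_comp' (f := e) φ).symm
    rw [Fin.sum_univ_succ]
    simp only [tr]
    by_cases hX : Nonempty X
    swap
    · have : IsEmpty X := not_nonempty_iff.mp hX
      exact absurd (measure_univ (μ := μ)) (by simp [Measure.eq_zero_of_isEmpty])
    obtain ⟨x0⟩ := hX
    have h0 := es_prod (μ := μ) (ν := Measure.pi fun _ : Fin n => μ) (F := fun z => f (e z))
      (hf.comp e.measurable) (fun z => hC _) (G := fun y => g 0 (e (x0, y)))
      ((hg 0).comp (e.measurable.comp measurable_prodMk_left)) (fun y => hgC _ _)
    have h0' : ∀ z : X × (Fin n → X), g 0 (e (x0, z.2)) = g 0 (e z) := by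
      rintro ⟨x, y⟩
      rw [hei, hei, ← hgu 0 (Fin.cons x y) x0, Fin.update_cons_zero]
    simp only [h0'] at h0
    refine h0.trans (add_le_add le_rfl ?_)
    have hi : ∀ k : Fin n, Integrable (fun z => (f (e z) - g k.succ (e z)) ^ 2)
        (μ.prod (Measure.pi fun _ : Fin n => μ)) := fun k =>
      es_int_sq (C := C + C) ((hf.comp e.measurable).sub ((hg _).comp e.measurable)) fun z =>
        (abs_sub _ _).trans (add_le_add (hC _) (hgC _ _))
    simp_rw [fun k => integral_prod _ (hi k)]
    rw [← integral_finsetSum _ (fun k _ => (hi k).integral_prod_left)]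
    refine integral_mono ?_ (integrable_finsetSum _ fun k _ => (hi k).integral_prod_left) ?_
    · refine Integrable.sub (es_int_sq (hf.comp e.measurable) (fun z => hC _)).integral_prod_left ?_
      refine es_int_sq (C := C) ?_ fun x => es_abs_int fun y => hC _
      exact ((hf.comp e.measurable).stronglyMeasurable.integral_prod_right' (ν := Measure.pi fun _ : Fin n => μ)).measurable
    · intro x
      refine ih (fun y => f (e (x, y))) (hf.comp (e.measurable.comp measurable_prodMk_left))
        (fun y => hC _) (fun k y => g k.succ (e (x, y)))
        (fun k => (hg _).comp (e.measurable.comp measurable_prodMk_left)) (fun k y => hgC _ _) ?_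
      intro k y x'
      simp only [hei]
      rw [← hgu k.succ (Fin.cons x y) x', Fin.cons_update]


lemma pi_all {X : Type*} [MeasurableSpace X] (μ : Measure X) [IsProbabilityMeasure μ]
    (n : ℕ) (S : Finset (Fin n)) (Q : Set X) :
    (Measure.pi fun _ : Fin n => μ).real {ω | ∀ j ∈ S, ω j ∈ Q} = μ.real Q ^ S.card := by
  classical
  have : {ω : Fin n → X | ∀ j ∈ S, ω j ∈ Q} =
      Set.pi Set.univ (fun j => if j ∈ S then Q else Set.univ) := by
    ext ω
    simp only [Set.mem_ofPred_eq, Set.mem_pi, Set.mem_univ, forall_true_left]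
    refine forall_congr' fun j => ?_
    split_ifs with h <;> simp [h]
  rw [this, measureReal_def, Measure.pi_pi, ENNReal.toReal_prod]
  have : ∀ j : Fin n, (μ (if j ∈ S then Q else Set.univ)).toReal =
      if j ∈ S then μ.real Q else 1 := fun j => by
    split_ifs <;> simp [measureReal_def]
  simp_rw [this]
  rw [Finset.prod_ite_mem, Finset.univ_inter, Finset.prod_const]

/-- second moment of a binomial-type count -/
lemma count_sq {X : Type*} [MeasurableSpace X] (μ : Measure X) [IsProbabilityMeasure μ]
    (n : ℕ) (Q : Set X) (hQ : MeasurableSet Q) (q : ℝ) (hq : μ.real Q ≤ q) :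
    ∫ y, (1 + ∑ i, Q.indicator (fun _ => (1:ℝ)) (y i)) ^ 2 ∂(Measure.pi fun _ : Fin n => μ) ≤
      2 + 2 * (n * q + (n * q) ^ 2) := by
  classical
  have hq0 : 0 ≤ q := measureReal_nonneg.trans hq
  have hmeas : ∀ S : Finset (Fin n), MeasurableSet {y : Fin n → X | ∀ j ∈ S, y j ∈ Q} := by
    intro S
    have : {y : Fin n → X | ∀ j ∈ S, y j ∈ Q} = ⋂ j ∈ S, (fun y : Fin n → X => y j) ⁻¹' Q := by
      ext; simp
    rw [this]
    exact Finset.measurableSet_biInter _ fun j _ => measurable_pi_apply j hQ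
  have hI : ∀ S : Finset (Fin n), Integrable
      ({y : Fin n → X | ∀ j ∈ S, y j ∈ Q}.indicator (fun _ => (1:ℝ)))
      (Measure.pi fun _ : Fin n => μ) := fun S =>
    (integrable_const (1:ℝ)).indicator (hmeas S)
  have hpt : ∀ y : Fin n → X, (1 + ∑ i, Q.indicator (fun _ => (1:ℝ)) (y i)) ^ 2 ≤
      2 + 2 * ∑ i, ∑ j, {y : Fin n → X | ∀ l ∈ ({i, j} : Finset (Fin n)), y l ∈ Q}.indicator
        (fun _ => (1:ℝ)) y := by
    intro y
    have : (∑ i, Q.indicator (fun _ => (1:ℝ)) (y i)) ^ 2 =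
        ∑ i, ∑ j, {y : Fin n → X | ∀ l ∈ ({i, j} : Finset (Fin n)), y l ∈ Q}.indicator
        (fun _ => (1:ℝ)) y := by
      rw [sq, Finset.sum_mul_sum]
      refine Finset.sum_congr rfl fun i _ => Finset.sum_congr rfl fun j _ => ?_
      by_cases h1 : y i ∈ Q <;> by_cases h2 : y j ∈ Q <;> simp [h1, h2]
    rw [← this]
    nlinarith [sq_nonneg (1 - ∑ i, Q.indicator (fun _ => (1:ℝ)) (y i))]
  have hRI : Integrable (fun y : Fin n → X => 2 + 2 * ∑ i, ∑ j,
      {y : Fin n → X | ∀ l ∈ ({i, j} : Finset (Fin n)), y l ∈ Q}.indicator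
        (fun _ => (1:ℝ)) y) (Measure.pi fun _ : Fin n => μ) :=
    (integrable_const _).add ((integrable_finsetSum _ fun i _ =>
      integrable_finsetSum _ fun j _ => hI _).const_mul _)
  refine (integral_mono_of_nonneg (Filter.Eventually.of_forall fun y => sq_nonneg _) hRI
    (Filter.Eventually.of_forall hpt)).trans ?_
  rw [integral_add (integrable_const _) ((integrable_finsetSum _ fun i _ =>
      integrable_finsetSum _ fun j _ => hI _).const_mul _), integral_const_mul,
      integral_finsetSum _ (fun i _ => integrable_finsetSum _ fun j _ => hI _)]
  simp_rw [fun i => integral_finsetSum (μ := Measure.pi fun _ : Fin n => μ) Finset.univ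
    (fun j _ => hI {i, j}), fun i j => integral_indicator_const (μ := Measure.pi fun _ : Fin n => μ)
     (1:ℝ) (hmeas {i, j}), pi_all]
  have hb : ∀ i j : Fin n, μ.real Q ^ (({i, j} : Finset (Fin n)).card) • (1:ℝ) ≤
      (if i = j then q else 0) + q ^ 2 := by
    intro i j
    by_cases h : i = j
    · subst h; simp; nlinarith
    · simp [h, Finset.card_pair h]
      exact pow_le_pow_left₀ measureReal_nonneg hq 2
  have : ∑ i, ∑ j, μ.real Q ^ (({i, j} : Finset (Fin n)).card) • (1:ℝ) ≤ n * q + (n * q) ^ 2 := by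
    refine (Finset.sum_le_sum fun i _ => Finset.sum_le_sum fun j _ => hb i j).trans (le_of_eq ?_)
    simp [Finset.sum_add_distrib]; ring
  simp only [integral_const, probReal_univ, one_smul]
  linarith

lemma near_count {X : Type*} [MeasurableSpace X] (μ : Measure X) [IsProbabilityMeasure μ]
    (n : ℕ) (k : Fin n) (A : Set X) (hA : MeasurableSet A) (R : Set (X × X))
    (hR : MeasurableSet R) (q : ℝ) (hq0 : 0 ≤ q) (hq : ∀ x ∈ A, μ.real {y | (x, y) ∈ R} ≤ q) :
    ∫ ω, A.indicator (fun _ => (1:ℝ)) (ω k) *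
      (1 + ∑ i ∈ Finset.univ.erase k, R.indicator (fun _ => (1:ℝ)) (ω k, ω i)) ^ 2
        ∂(Measure.pi fun _ : Fin n => μ) ≤
      μ.real A * (2 + 2 * (n * q + (n * q) ^ 2)) := by
  classical
  obtain ⟨m, rfl⟩ : ∃ m, n = m + 1 := ⟨n - 1, by have := k.pos; omega⟩
  have mp := (measurePreserving_piFinSuccAbove (fun _ : Fin (m+1) => μ) k).symm
  set e := (MeasurableEquiv.piFinSuccAbove (fun _ : Fin (m+1) => X) k).symm with he
  have hei : ∀ x y, e (x, y) = k.insertNth x y := fun x y => by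
      rw [he]; rfl
  rw [← mp.integral_comp' (f := e)]
  have hsum : ∀ (x : X) (y : Fin m → X),
      ∑ i ∈ Finset.univ.erase k, R.indicator (fun _ => (1:ℝ)) (e (x, y) k, e (x, y) i) =
      ∑ i, {y | (x, y) ∈ R}.indicator (fun _ => (1:ℝ)) (y i) := by
    intro x y
    have h1 := Fin.sum_univ_succAbove
      (fun i => R.indicator (fun _ => (1:ℝ)) (e (x, y) k, e (x, y) i)) k
    rw [← Finset.add_sum_erase _ _ (Finset.mem_univ k)] at h1
    rw [add_left_cancel h1]
    simp [hei]
    rfl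
  have hm1 : Measurable fun z : X × (Fin m → X) =>
      A.indicator (fun _ => (1:ℝ)) (e z k) *
      (1 + ∑ i ∈ Finset.univ.erase k, R.indicator (fun _ => (1:ℝ)) (e z k, e z i)) ^ 2 := by
    have hc : ∀ i, Measurable fun z : X × (Fin m → X) => e z i := fun i =>
      (measurable_pi_apply i).comp e.measurable
    refine Measurable.mul ((measurable_const.indicator hA).comp (hc k)) ?_
    refine ((Finset.measurable_sum _ fun i _ => ?_).const_add _).pow_const _
    exact (measurable_const.indicator hR).comp ((hc k).prodMk (hc i))
  have hbd : ∀ z : X × (Fin m → X), |A.indicator (fun _ => (1:ℝ)) (e z k) *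
      (1 + ∑ i ∈ Finset.univ.erase k, R.indicator (fun _ => (1:ℝ)) (e z k, e z i)) ^ 2| ≤
      1 * (1 + ∑ i ∈ Finset.univ.erase k, (1:ℝ)) ^ 2 := by
    intro z
    have i0 : ∀ {Z : Type _} (S : Set Z) (z : Z), 0 ≤ S.indicator (fun _ => (1:ℝ)) z :=
      fun S z => Set.indicator_nonneg (fun _ _ => zero_le_one) z
    have i1 : ∀ {Z : Type _} (S : Set Z) (z : Z), S.indicator (fun _ => (1:ℝ)) z ≤ 1 :=
      fun S z => Set.indicator_le_self' (fun _ _ => zero_le_one) z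
    have s0 := Finset.sum_nonneg (s := Finset.univ.erase k)
      (f := fun i => R.indicator (fun _ => (1:ℝ)) (e z k, e z i)) fun i _ => i0 R _
    have s1 := Finset.sum_le_sum (s := Finset.univ.erase k)
      (f := fun i => R.indicator (fun _ => (1:ℝ)) (e z k, e z i)) (g := fun _ => 1) fun i _ => i1 R _
    rw [abs_of_nonneg (mul_nonneg (i0 A _) (sq_nonneg _))]
    exact mul_le_mul (i1 A _) (pow_le_pow_left₀ (by linarith) (by linarith) 2) (sq_nonneg _) zero_le_one
  have hint := es_int (μ := μ.prod (Measure.pi fun _ : Fin m => μ)) hm1 hbd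
  rw [integral_prod _ hint]
  have hle : ∀ x, ∫ y, A.indicator (fun _ => (1:ℝ)) (e (x, y) k) *
      (1 + ∑ i ∈ Finset.univ.erase k, R.indicator (fun _ => (1:ℝ)) (e (x, y) k, e (x, y) i)) ^ 2
      ∂(Measure.pi fun _ : Fin m => μ) ≤
      A.indicator (fun _ => 2 + 2 * ((m+1 : ℕ) * q + ((m+1 : ℕ) * q) ^ 2)) x := by
    intro x
    simp_rw [hsum, hei, Fin.insertNth_apply_same]
    rw [integral_const_mul]
    by_cases hx : x ∈ A
    · simp only [Set.indicator_of_mem hx, one_mul]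
      refine (count_sq μ m _ (measurable_prodMk_left hR) q (hq x hx)).trans ?_
      have : (m : ℝ) * q ≤ ((m+1 : ℕ) : ℝ) * q := by push_cast; nlinarith
      have h0 : 0 ≤ (m : ℝ) * q := by positivity
      have := pow_le_pow_left₀ h0 this 2
      linarith
    · simp [hx]
  refine (integral_mono hint.integral_prod_left ((integrable_const _).indicator hA) hle).trans ?_
  rw [integral_indicator_const _ hA]
  simp


abbrev PP := EuclideanSpace ℝ (Fin 2)

lemma ind_congr {Z Z' : Type*} {S : Set Z} {S' : Set Z'} {a : Z} {b : Z'} (h : a ∈ S ↔ b ∈ S') :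
    S.indicator (fun _ => (1:ℝ)) a = S'.indicator (fun _ => (1:ℝ)) b := by
  by_cases ha : a ∈ S
  · rw [Set.indicator_of_mem ha, Set.indicator_of_mem (h.1 ha)]
  · rw [Set.indicator_of_notMem ha, Set.indicator_of_notMem fun hb => ha (h.2 hb)]

lemma sep_iff {n : ℕ} (ω : Fin n → PP) (T : Set (Fin n)) (i : Fin n) :
    ω i ∉ convexHull ℝ (ω '' T) ↔ ∃ w : PP, ∀ j ∈ T, inner ℝ w (ω j) < inner ℝ w (ω i) := by
  constructor
  · intro h
    have hcl : IsClosed (convexHull ℝ (ω '' T)) :=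
      ((Set.toFinite T).image ω).isCompact_convexHull ℝ |>.isClosed
    obtain ⟨f, u, h1, h2⟩ := geometric_hahn_banach_closed_point (convex_convexHull ℝ _) hcl h
    refine ⟨(InnerProductSpace.toDual ℝ PP).symm f, fun j hj => ?_⟩
    simp only [InnerProductSpace.toDual_symm_apply]
    exact (h1 _ (subset_convexHull ℝ _ ⟨j, hj, rfl⟩)).trans h2
  · rintro ⟨w, hw⟩ h
    have hc : Convex ℝ {x : PP | inner ℝ w x < inner ℝ w (ω i)} :=
      convex_halfSpace_lt (innerₛₗ ℝ w).isLinear _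
    have := convexHull_min (s := ω '' T) (by rintro _ ⟨j, hj, rfl⟩; exact hw j hj) hc h
    rw [Set.mem_ofPred_eq] at this
    exact lt_irrefl _ this

lemma extr_iff {n : ℕ} (ω : Fin n → PP) (hω : Function.Injective ω) (T : Set (Fin n)) (i : Fin n)
    (hi : i ∈ T) : ω i ∈ Set.extremePoints ℝ (convexHull ℝ (ω '' T)) ↔
      ω i ∉ convexHull ℝ (ω '' (T \ {i})) := by
  constructor
  · intro h
    have h2 := ((convex_convexHull ℝ (ω '' T)).mem_extremePoints_iff_mem_sdiff_convexHull_sdiff.1 h).2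
    refine fun h3 => h2 (convexHull_mono ?_ h3)
    rintro _ ⟨j, hj, rfl⟩
    exact ⟨subset_convexHull ℝ _ ⟨j, hj.1, rfl⟩, fun h => hj.2 (hω h)⟩
  · intro h
    obtain ⟨w, hw⟩ := (sep_iff ω _ i).1 h
    have key : ∀ y ∈ convexHull ℝ (ω '' T), y = ω i ∨ inner ℝ w y < inner ℝ w (ω i) := by
      have hc : Convex ℝ {y : PP | y = ω i ∨ inner ℝ w y < inner ℝ w (ω i)} := by
        intro y hy z hz a b ha hb hab
        rcases hy with rfl | hy
        · rcases hz with rfl | hz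
          · left; rw [← add_smul, hab, one_smul]
          · rcases hb.eq_or_lt with rfl | hb
            · left; simp at hab; simp [hab]
            · right; rw [inner_add_right, inner_smul_right, inner_smul_right]
              have : a = 1 - b := by linarith
              subst this; nlinarith
        · rcases hz with rfl | hz
          · rcases ha.eq_or_lt with rfl | ha
            · left; simp at hab; simp [hab]
            · right; rw [inner_add_right, inner_smul_right, inner_smul_right]
              have : b = 1 - a := by linarith
              subst this; nlinarith
          · right; rw [inner_add_right, inner_smul_right, inner_smul_right]
            have : b = 1 - a := by linarith
            subst this
            rcases ha.eq_or_lt with rfl | ha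
            · simpa using hz
            · nlinarith
      refine fun y hy => convexHull_min (s := ω '' T) ?_ hc hy
      rintro _ ⟨j, hj, rfl⟩
      by_cases hji : j = i
      · left; rw [hji]
      · right; exact hw j ⟨hj, hji⟩
    rw [mem_extremePoints_iff_left]
    refine ⟨subset_convexHull ℝ _ ⟨i, hi, rfl⟩, ?_⟩
    rintro y hy z hz ⟨a, b, ha, hb, hab, hx⟩
    rcases key y hy with h1 | h1
    · exact h1
    · exfalso
      have h2 : inner ℝ w z ≤ inner ℝ w (ω i) := by
        rcases key z hz with h | h
        · rw [h]
        · exact h.le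
      have h3 : inner ℝ w (ω i) = a * inner ℝ w y + b * inner ℝ w z := by
        rw [← hx, inner_add_right, inner_smul_right, inner_smul_right]
      have : b = 1 - a := by linarith
      subst this
      nlinarith

open Classical in
noncomputable def vc {n : ℕ} (T : Finset (Fin n)) (ω : Fin n → PP) : ℝ :=
  ∑ i ∈ T, {ω : Fin n → PP | ω i ∉ convexHull ℝ (ω '' ((T : Set (Fin n)) \ {i}))}.indicator
    (fun _ => (1:ℝ)) ω

lemma vc_meas {n : ℕ} (T : Finset (Fin n)) : Measurable (vc T) := by
  unfold vc
  refine Finset.measurable_sum _ fun i _ => measurable_const.indicator (IsOpen.measurableSet ?_)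
  have : {ω : Fin n → PP | ω i ∉ convexHull ℝ (ω '' ((T : Set (Fin n)) \ {i}))} =
      ⋃ w : PP, ⋂ j ∈ ((T : Set (Fin n)) \ {i}), {ω | inner ℝ w (ω j) < inner ℝ w (ω i)} := by
    ext ω
    simp only [Set.mem_ofPred_eq, sep_iff, Set.mem_iUnion, Set.mem_iInter]
  rw [this]
  refine isOpen_iUnion fun w => (Set.toFinite _).isOpen_biInter fun j _ => ?_
  exact isOpen_lt (by fun_prop) (by fun_prop)

lemma vc_nonneg {n : ℕ} (T : Finset (Fin n)) (ω : Fin n → PP) : 0 ≤ vc T ω :=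
  Finset.sum_nonneg fun _ _ => Set.indicator_nonneg (fun _ _ => zero_le_one) _

lemma vc_le {n : ℕ} (T : Finset (Fin n)) (ω : Fin n → PP) : vc T ω ≤ n := by
  have h : vc T ω ≤ ∑ i ∈ T, (1:ℝ) :=
    Finset.sum_le_sum fun _ _ => Set.indicator_le_self' (fun _ _ => zero_le_one) _
  refine h.trans ?_
  simp
  exact (Finset.card_le_univ T).trans (by simp)

lemma vc_abs {n : ℕ} (T : Finset (Fin n)) (ω : Fin n → PP) : |vc T ω| ≤ n := by
  rw [abs_of_nonneg (vc_nonneg _ _)]; exact vc_le _ _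

lemma vc_update {n : ℕ} (k : Fin n) (ω : Fin n → PP) (x : PP) :
    vc (Finset.univ.erase k) (Function.update ω k x) = vc (Finset.univ.erase k) ω := by
  unfold vc
  refine Finset.sum_congr rfl fun i hi => ?_
  have hik : i ≠ k := Finset.ne_of_mem_erase hi
  have : Function.update ω k x '' (((Finset.univ.erase k : Finset (Fin n)) : Set (Fin n)) \ {i}) =
      ω '' (((Finset.univ.erase k : Finset (Fin n)) : Set (Fin n)) \ {i}) := by
    refine Set.image_congr fun j hj => ?_
    have : j ≠ k := Finset.ne_of_mem_erase (Finset.mem_coe.1 hj.1)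
    simp [this]
  refine ind_congr ?_
  rw [Set.mem_ofPred_eq, Set.mem_ofPred_eq, this, Function.update_of_ne hik]

lemma vc_eq_ncard {n : ℕ} (ω : Fin n → PP) (hω : Function.Injective ω) :
    (Nat.card (Set.extremePoints ℝ (convexHull ℝ (Set.range ω))) : ℝ) = vc Finset.univ ω := by
  classical
  have h1 : Set.extremePoints ℝ (convexHull ℝ (Set.range ω)) =
      ((Finset.univ.filter fun i => ω i ∉ convexHull ℝ (ω '' (Set.univ \ {i}))).image ω :
        Finset PP) := by
    ext x
    simp only [Finset.coe_image, Finset.coe_filter, Finset.mem_univ, true_and, Set.mem_image,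
      Set.mem_ofPred_eq]
    constructor
    · intro hx
      obtain ⟨i, rfl⟩ := extremePoints_convexHull_subset hx
      refine ⟨i, ?_, rfl⟩
      rw [← extr_iff ω hω _ i (Set.mem_univ _), Set.image_univ]
      exact hx
    · rintro ⟨i, hi, rfl⟩
      rw [← extr_iff ω hω _ i (Set.mem_univ _), Set.image_univ] at hi
      exact hi
  rw [h1, Nat.card_coe_set_eq, Set.ncard_coe_finset, Finset.card_image_of_injective _ hω]
  unfold vc
  simp only [Set.indicator, Set.mem_ofPred_eq, Finset.coe_univ]
  rw [Finset.card_filter]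
  push_cast
  rfl

lemma cap_diam {h : ℝ} (h1 : h ≤ 1) {u x y : PP} (hu : ‖u‖ = 1) (hx : ‖x‖ ≤ 1)
    (hy : ‖y‖ ≤ 1) (hux : 1 - h ≤ inner ℝ u x) (huy : 1 - h ≤ inner ℝ u y) :
    ‖x - y‖ ^ 2 ≤ 8 * h := by
  have hp := parallelogram_law_with_norm ℝ x y
  have h2 : 2 - 2 * h ≤ ‖x + y‖ := by
    have := real_inner_le_norm u (x + y)
    rw [hu, one_mul, inner_add_right] at this
    linarith
  have h3 : (2 - 2 * h) ^ 2 ≤ ‖x + y‖ ^ 2 := pow_le_pow_left₀ (by linarith) h2 2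
  have h4 : ‖x‖ ^ 2 ≤ 1 := pow_le_one₀ (norm_nonneg x) hx
  have h5 : ‖y‖ ^ 2 ≤ 1 := pow_le_one₀ (norm_nonneg y) hy
  nlinarith [sq_nonneg h]

/-- The good event. -/
def Good {n : ℕ} (h : ℝ) (ω : Fin n → PP) : Prop :=
  ∀ i k : Fin n, ∀ u : PP, ‖u‖ = 1 → ∃ j, j ≠ i ∧ j ≠ k ∧ 1 - h ≤ inner ℝ u (ω j)

def ann (h : ℝ) : Set PP := {x | 1 - h < ‖x‖ ∧ ‖x‖ ≤ 1}
def nearR (h : ℝ) : Set (PP × PP) := {z | 1 - h < ‖z.2‖ ∧ ‖z.1 - z.2‖ ^ 2 ≤ 8 * h}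

/-- on the good event, a separating direction can be normalised -/
lemma good_sep {n : ℕ} {h : ℝ} {ω : Fin n → PP} (hg : Good h ω) (i k : Fin n) (T : Set (Fin n))
    (hT : ∀ j, j ≠ i → j ≠ k → j ∈ T) (hi : ω i ∉ convexHull ℝ (ω '' T)) :
    ∃ u : PP, ‖u‖ = 1 ∧ 1 - h < inner ℝ u (ω i) ∧
      ∀ j ∈ T, inner ℝ u (ω j) < inner ℝ u (ω i) := by
  obtain ⟨w, hw⟩ := (sep_iff ω T i).1 hi
  have hw0 : w ≠ 0 := by
    rintro rfl
    obtain ⟨j, hj1, hj2, -⟩ := hg i k (EuclideanSpace.single 0 1) (by simp)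
    have := hw j (hT j hj1 hj2)
    simp at this
  have hn : 0 < ‖w‖⁻¹ := inv_pos.2 (norm_pos_iff.2 hw0)
  have hu : ‖(‖w‖⁻¹ • w)‖ = 1 := by
    rw [norm_smul, norm_inv, norm_norm, inv_mul_cancel₀ (norm_ne_zero_iff.2 hw0)]
  have hlt : ∀ j ∈ T, inner ℝ (‖w‖⁻¹ • w) (ω j) < inner ℝ (‖w‖⁻¹ • w) (ω i) := by
    intro j hj
    rw [real_inner_smul_left, real_inner_smul_left]
    exact mul_lt_mul_of_pos_left (hw j hj) hn
  obtain ⟨j, hj1, hj2, hj3⟩ := hg i k _ hu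
  exact ⟨_, hu, hj3.trans_lt (hlt j (hT j hj1 hj2)), hlt⟩

lemma vc_diff {n : ℕ} {h : ℝ} (h1 : h ≤ 1) (ω : Fin n → PP) (hω : Function.Injective ω)
    (hd : ∀ i, ‖ω i‖ ≤ 1) (hg : Good h ω) (k : Fin n) :
    (vc Finset.univ ω - vc (Finset.univ.erase k) ω) ^ 2 ≤
      (ann h).indicator (fun _ => (1:ℝ)) (ω k) *
      (1 + ∑ i ∈ Finset.univ.erase k, (nearR h).indicator (fun _ => (1:ℝ)) (ω k, ω i)) ^ 2 := by
  classical
  have hsplit : vc Finset.univ ω =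
    {ω : Fin n → PP | ω k ∉ convexHull ℝ (ω '' (Set.univ \ {k}))}.indicator
    (fun _ => (1:ℝ)) ω + ∑ i ∈ Finset.univ.erase k,
    {ω : Fin n → PP | ω i ∉ convexHull ℝ (ω '' (Set.univ \ {i}))}.indicator
    (fun _ => (1:ℝ)) ω := by
    unfold vc
    rw [← Finset.add_sum_erase _ _ (Finset.mem_univ k)]
    simp
  have i0 : ∀ {Z : Type} (S : Set Z) (z : Z), 0 ≤ S.indicator (fun _ => (1:ℝ)) z :=
      fun S z => Set.indicator_nonneg (fun _ _ => zero_le_one) z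
  have her : ((Finset.univ.erase k : Finset (Fin n)) : Set (Fin n)) = Set.univ \ {k} := by
    ext; simp
  by_cases hk : ω k ∈ convexHull ℝ (ω '' (Set.univ \ {k}))
  · have hhull : convexHull ℝ (ω '' Set.univ) = convexHull ℝ (ω '' (Set.univ \ {k})) := by
      refine subset_antisymm (convexHull_min ?_ (convex_convexHull ℝ _))
        (convexHull_mono (Set.image_mono Set.sdiff_subset))
      rintro _ ⟨j, -, rfl⟩
      by_cases hj : j = k
      · rw [hj]; exact hk
      · exact subset_convexHull ℝ _ ⟨j, ⟨trivial, hj⟩, rfl⟩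
    have : vc Finset.univ ω = vc (Finset.univ.erase k) ω := by
      rw [hsplit, Set.indicator_of_notMem (by simpa using hk), zero_add]
      unfold vc
      refine Finset.sum_congr rfl fun i hi => ?_
      have hik : i ≠ k := Finset.ne_of_mem_erase hi
      have e1 := extr_iff ω hω Set.univ i trivial
      have e2 := extr_iff ω hω (Set.univ \ {k}) i ⟨trivial, hik⟩
      rw [hhull] at e1
      have e3 := e1.symm.trans e2
      refine ind_congr ?_
      rw [Set.mem_ofPred_eq, Set.mem_ofPred_eq, her, e3]
    rw [this, sub_self]
    simp only [ne_eq, OfNat.ofNat_ne_zero, not_false_eq_true, zero_pow]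
    exact mul_nonneg (i0 _ _) (sq_nonneg _)
  · have hkA : ω k ∈ ann h := by
      obtain ⟨u, hu, hu2, -⟩ := good_sep hg k k (Set.univ \ {k}) (fun j hj _ => ⟨trivial, hj⟩) hk
      have := real_inner_le_norm u (ω k)
      rw [hu, one_mul] at this
      exact ⟨hu2.trans_le this, hd k⟩
    rw [Set.indicator_of_mem hkA, one_mul]
    have hterm : ∀ i ∈ Finset.univ.erase k,
        0 ≤ {ω : Fin n → PP | ω i ∉ convexHull ℝ (ω '' ((Set.univ \ {k}) \ {i}))}.indicator
            (fun _ => (1:ℝ)) ω -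
          {ω : Fin n → PP | ω i ∉ convexHull ℝ (ω '' (Set.univ \ {i}))}.indicator
            (fun _ => (1:ℝ)) ω ∧
        {ω : Fin n → PP | ω i ∉ convexHull ℝ (ω '' ((Set.univ \ {k}) \ {i}))}.indicator
            (fun _ => (1:ℝ)) ω -
          {ω : Fin n → PP | ω i ∉ convexHull ℝ (ω '' (Set.univ \ {i}))}.indicator
            (fun _ => (1:ℝ)) ω ≤ (nearR h).indicator (fun _ => (1:ℝ)) (ω k, ω i) := by
      intro i hi
      have hik : i ≠ k := Finset.ne_of_mem_erase hi
      simp only [Set.indicator, Set.mem_ofPred_eq]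
      by_cases ha : ω i ∈ convexHull ℝ (ω '' ((Set.univ \ {k}) \ {i}))
      · have hb : ω i ∈ convexHull ℝ (ω '' (Set.univ \ {i})) :=
          convexHull_mono (Set.image_mono (Set.sdiff_subset_sdiff_left Set.sdiff_subset)) ha
        simp only [ha, hb, not_true_eq_false, if_false, sub_self, le_refl, true_and]
        split_ifs <;> norm_num
      · by_cases hb : ω i ∈ convexHull ℝ (ω '' (Set.univ \ {i}))
        · simp only [ha, hb, not_true_eq_false, if_false, not_false_eq_true, if_true, sub_zero,
            zero_le_one, true_and]
          rw [if_pos]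
          obtain ⟨u, hu, hu2, hu3⟩ := good_sep hg i k ((Set.univ \ {k}) \ {i})
            (fun j h1 h2 => ⟨⟨trivial, h2⟩, h1⟩) ha
          have huk : inner ℝ u (ω i) ≤ inner ℝ u (ω k) := by
            by_contra hlt
            push Not at hlt
            refine (sep_iff ω (Set.univ \ {i}) i).2 ⟨u, fun j hj => ?_⟩ hb
            by_cases hjk : j = k
            · rw [hjk]; exact hlt
            · exact hu3 j ⟨⟨trivial, hjk⟩, hj.2⟩
          have h5 := real_inner_le_norm u (ω i)
          rw [hu, one_mul] at h5
          exact ⟨hu2.trans_le h5, cap_diam h1 hu (hd k) (hd i) (hu2.le.trans huk) hu2.le⟩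
        · simp only [ha, hb, not_false_eq_true, if_true, sub_self, le_refl, true_and]
          split_ifs <;> norm_num
    have s0 := Finset.sum_nonneg fun i hi => (hterm i hi).1
    have s1 := Finset.sum_le_sum fun i hi => (hterm i hi).2
    rw [Finset.sum_sub_distrib] at s0 s1
    rw [hsplit, Set.indicator_of_mem (by simpa using hk)]
    unfold vc
    simp only [her]
    refine sq_le_sq' ?_ ?_ <;> linarith


lemma exists_basis (v : PP) (hv : ‖v‖ = 1) : ∃ b : OrthonormalBasis (Fin 2) ℝ PP, b 0 = v := by
  have ho : Orthonormal ℝ (({0} : Set (Fin 2)).domRestrict (fun _ : Fin 2 => v)) := by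
    constructor
    · intro i; simpa using hv
    · intro i j hij; exact absurd (Subsingleton.elim i j) hij
  obtain ⟨b, hb⟩ := ho.exists_orthonormalBasis_extension_of_card_eq (by simp)
  exact ⟨b, hb 0 rfl⟩

def box (b : OrthonormalBasis (Fin 2) ℝ PP) (p q c : ℝ) : Set PP :=
  {x | p ≤ inner ℝ (b 0) x ∧ inner ℝ (b 0) x ≤ q ∧ -c ≤ inner ℝ (b 1) x ∧ inner ℝ (b 1) x ≤ c}

lemma box_eq (b : OrthonormalBasis (Fin 2) ℝ PP) (p q c : ℝ) :
    box b p q c = (fun x => WithLp.ofLp (b.repr x)) ⁻¹' (Set.Icc ![p, -c] ![q, c]) := by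
  ext x
  simp [box, Set.mem_Icc, Pi.le_def, Fin.forall_fin_two, OrthonormalBasis.repr_apply_apply]
  tauto

lemma box_meas (b : OrthonormalBasis (Fin 2) ℝ PP) (p q c : ℝ) : MeasurableSet (box b p q c) := by
  rw [box_eq]
  exact ((PiLp.volume_preserving_ofLp (Fin 2)).comp b.measurePreserving_repr).measurable
    measurableSet_Icc

lemma box_vol (b : OrthonormalBasis (Fin 2) ℝ PP) (p q c : ℝ) :
    volume (box b p q c) = ENNReal.ofReal (q - p) * ENNReal.ofReal (2 * c) := by
  rw [box_eq]
  have := ((PiLp.volume_preserving_ofLp (Fin 2)).comp b.measurePreserving_repr).measure_preimage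
    (measurableSet_Icc (a := ![p, -c]) (b := ![q, c])).nullMeasurableSet
  refine this.trans ?_
  rw [Real.volume_Icc_pi]
  rw [Fin.prod_univ_two]
  have e2 : c - -c = 2 * c := by ring
  simp only [Matrix.cons_val_zero, Matrix.cons_val_one, e2]

lemma norm_sq_basis (b : OrthonormalBasis (Fin 2) ℝ PP) (x : PP) :
    ‖x‖ ^ 2 = inner ℝ (b 0) x ^ 2 + inner ℝ (b 1) x ^ 2 := by
  rw [← b.sum_sq_norm_inner_right x, Fin.sum_univ_two]
  simp

lemma dens_meas (β : ℝ) : Measurable fun x : PP =>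
    (if ‖x‖ ≤ 1 then (β + 1) / Real.pi * (1 - ‖x‖ ^ 2) ^ β else 0) := by
  refine Measurable.ite (measurableSet_le measurable_norm measurable_const) ?_ measurable_const
  fun_prop

lemma beta_upper {β : ℝ} (hβ : 0 ≤ β) {h : ℝ} (hh : 0 ≤ h) (h1 : h ≤ 1) (S : Set PP) (hS : MeasurableSet S)
    (hSA : S ⊆ {x | 1 - h < ‖x‖}) (V : ℝ) (hV : 0 ≤ V)
    (hvol : volume (S ∩ Metric.closedBall 0 1) ≤ ENNReal.ofReal V) :
    (betaMeasure β).real S ≤ (β + 1) / Real.pi * (2 * h) ^ β * V := by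
  refine ENNReal.toReal_le_of_le_ofReal (by positivity) ?_
  rw [ENNReal.ofReal_mul (by positivity)]
  refine le_trans ?_ (mul_le_mul_right hvol _)
  rw [betaMeasure, withDensity_apply _ hS]
  calc _ ≤ ∫⁻ x in S, (Metric.closedBall (0:PP) 1).indicator
        (fun _ => ENNReal.ofReal ((β + 1) / Real.pi * (2 * h) ^ β)) x := by
        refine setLIntegral_mono_ae' hS (Filter.Eventually.of_forall fun x hx => ?_)
        by_cases hx1 : ‖x‖ ≤ 1
        · rw [if_pos hx1, Set.indicator_of_mem (by simpa using hx1)]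
          refine ENNReal.ofReal_le_ofReal (mul_le_mul_of_nonneg_left ?_ (by positivity))
          have : 1 - h < ‖x‖ := hSA hx
          refine Real.rpow_le_rpow ?_ ?_ hβ
          · nlinarith [norm_nonneg x]
          · nlinarith [norm_nonneg x]
        · rw [if_neg hx1]; simp
    _ = _ := by
        rw [lintegral_indicator_const Metric.isClosed_closedBall.measurableSet,
          Measure.restrict_apply Metric.isClosed_closedBall.measurableSet, Set.inter_comm]

lemma beta_lower {β : ℝ} (hβ : 0 ≤ β) [IsFiniteMeasure (betaMeasure β)] {t : ℝ} (h0 : 0 < t) (h1 : t ≤ 1)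
    (v : PP) (hv : ‖v‖ = 1) :
    (β + 1) / Real.pi * (t / 2) ^ β * (t / 2 * Real.sqrt t) ≤
      (betaMeasure β).real {x | 1 - t ≤ inner ℝ v x} := by
  obtain ⟨b, rfl⟩ := exists_basis v hv
  have hsub : box b (1 - t) (1 - t / 2) (Real.sqrt t / 2) ⊆ {x | 1 - t ≤ inner ℝ (b 0) x} :=
    fun x hx => hx.1
  refine le_trans ?_ (measureReal_mono hsub)
  rw [measureReal_def]
  refine (ENNReal.ofReal_le_iff_le_toReal (measure_ne_top _ _)).1 ?_
  rw [betaMeasure, withDensity_apply _ (box_meas _ _ _ _)]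
  have hs := Real.sq_sqrt h0.le
  have hs0 := Real.sqrt_nonneg t
  calc _ = ∫⁻ x in box b (1 - t) (1 - t / 2) (Real.sqrt t / 2),
        ENNReal.ofReal ((β + 1) / Real.pi * (t / 2) ^ β) := by
        have e1 : 1 - t / 2 - (1 - t) = t / 2 := by ring
        have e2 : 2 * (Real.sqrt t / 2) = Real.sqrt t := by ring
        rw [setLIntegral_const, box_vol, e1, e2, ENNReal.ofReal_mul (by positivity),
          ENNReal.ofReal_mul (p := t / 2) (by positivity)]
    _ ≤ _ := by
        refine setLIntegral_mono_ae' (box_meas _ _ _ _)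
          (Filter.Eventually.of_forall fun x hx => ?_)
        obtain ⟨a1, a2, a3, a4⟩ := hx
        have hn := norm_sq_basis b x
        have h2 : ‖x‖ ^ 2 ≤ 1 - t / 2 := by
          have e1 : inner ℝ (b 1) x ^ 2 ≤ (Real.sqrt t / 2) ^ 2 := sq_le_sq' (by linarith) a4
          have e2 : inner ℝ (b 0) x ^ 2 ≤ (1 - t / 2) ^ 2 := sq_le_sq' (by linarith) a2
          nlinarith
        have h3 : ‖x‖ ≤ 1 := by nlinarith [norm_nonneg x]
        rw [if_pos h3]
        refine ENNReal.ofReal_le_ofReal (mul_le_mul_of_nonneg_left ?_ (by positivity))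
        exact Real.rpow_le_rpow (by positivity) (by linarith) hβ

lemma ann_meas (h : ℝ) : MeasurableSet (ann h) :=
  (measurableSet_lt measurable_const measurable_norm).inter
    (measurableSet_le measurable_norm measurable_const)

lemma nearR_meas (h : ℝ) : MeasurableSet (nearR h) := by
  have h1 : MeasurableSet {z : PP × PP | 1 - h < ‖z.2‖} :=
    measurableSet_lt measurable_const measurable_snd.norm
  have h2 : MeasurableSet {z : PP × PP | ‖z.1 - z.2‖ ^ 2 ≤ 8 * h} :=
    measurableSet_le (((measurable_fst.sub measurable_snd).norm).pow_const 2) measurable_const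
  exact h1.inter h2

lemma ann_upper {β : ℝ} (hβ : 0 ≤ β) {h : ℝ} (h0 : 0 < h) (h1 : h ≤ 1) :
    (betaMeasure β).real (ann h) ≤ (β + 1) / Real.pi * (2 * h) ^ β * (2 * Real.pi * h) := by
  refine beta_upper hβ h0.le h1 _ (ann_meas h) (fun x hx => hx.1) _ (by positivity) ?_
  have hsub : ann h ∩ Metric.closedBall 0 1 ⊆ Metric.closedBall (0:PP) 1 \ Metric.closedBall 0 (1 - h) := by
    rintro x ⟨hx, hx2⟩
    refine ⟨hx2, ?_⟩
    simpa using hx.1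
  refine (measure_mono hsub).trans ?_
  rw [measure_sdiff (Metric.closedBall_subset_closedBall (by linarith))
    Metric.isClosed_closedBall.measurableSet.nullMeasurableSet measure_closedBall_lt_top.ne,
    EuclideanSpace.volume_closedBall_fin_two, EuclideanSpace.volume_closedBall_fin_two,
    ← ENNReal.ofReal_pow (by linarith), ← ENNReal.ofReal_pow (by linarith),
    ← ENNReal.ofReal_mul (by positivity), ← ENNReal.ofReal_mul (by positivity),
    ← ENNReal.ofReal_sub _ (by positivity)]
  refine ENNReal.ofReal_le_ofReal ?_
  nlinarith [Real.pi_pos, mul_pos Real.pi_pos (sq_pos_of_pos h0)]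

lemma near_upper {β : ℝ} (hβ : 0 ≤ β) {h : ℝ} (h0 : 0 < h) (h1 : h ≤ 1 / 6) (x : PP)
    (hx : x ∈ ann h) :
    (betaMeasure β).real {y | (x, y) ∈ nearR h} ≤
      (β + 1) / Real.pi * (2 * h) ^ β * (48 * h * Real.sqrt h) := by
  refine beta_upper hβ h0.le (by linarith) _ (measurable_prodMk_left (nearR_meas h)) (fun y hy => hy.1) _
    (by positivity) ?_
  have hx0 : 0 < ‖x‖ := by have := hx.1; linarith
  obtain ⟨b, hb⟩ := exists_basis (‖x‖⁻¹ • x) (by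
    rw [norm_smul, norm_inv, norm_norm, inv_mul_cancel₀ hx0.ne'])
  have hs := Real.sq_sqrt h0.le
  have hs0 := Real.sqrt_nonneg h
  have hsub : {y | (x, y) ∈ nearR h} ∩ Metric.closedBall 0 1 ⊆ box b (1 - 6 * h) 1 (4 * Real.sqrt h) := by
    rintro y ⟨⟨hy1, hy2⟩, hy3⟩
    simp only at hy1 hy2
    have hy3 : ‖y‖ ≤ 1 := by simpa using hy3
    obtain ⟨hx1, hx2⟩ := hx
    have e1 : 1 - 6 * h ≤ inner ℝ x y := by
      have := norm_sub_sq_real x y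
      nlinarith
    have e2 : inner ℝ x y ≤ inner ℝ (b 0) y := by
      rw [hb, real_inner_smul_left]
      have : 1 ≤ ‖x‖⁻¹ := (one_le_inv₀ hx0).2 hx2
      nlinarith
    have e3 : inner ℝ (b 0) y ≤ 1 := by
      have := real_inner_le_norm (b 0) y
      rw [b.norm_eq_one, one_mul] at this
      linarith
    have e4 : inner ℝ (b 1) y ^ 2 ≤ (4 * Real.sqrt h) ^ 2 := by
      have := norm_sq_basis b y
      have : (1 - 6 * h) ^ 2 ≤ inner ℝ (b 0) y ^ 2 := pow_le_pow_left₀ (by linarith) (by linarith) 2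
      nlinarith [norm_nonneg y]
    have e5 := abs_le_of_sq_le_sq' e4 (by positivity)
    exact ⟨by linarith, e3, e5.1, e5.2⟩
  refine (measure_mono hsub).trans ?_
  rw [box_vol, ← ENNReal.ofReal_mul (by linarith)]
  refine ENNReal.ofReal_le_ofReal (le_of_eq ?_)
  ring

lemma beta_disc (β : ℝ) : ∀ᵐ x ∂(betaMeasure β), ‖x‖ ≤ 1 := by
  rw [betaMeasure, ae_withDensity_iff (dens_meas β).ennreal_ofReal]
  refine Filter.Eventually.of_forall fun x hx => ?_
  by_contra h
  rw [if_neg h] at hx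
  simp at hx

lemma beta_prob {β : ℝ} (hβ : 0 ≤ β) : IsProbabilityMeasure (betaMeasure β) := by
  refine ⟨?_⟩
  rw [betaMeasure, withDensity_apply _ MeasurableSet.univ, Measure.restrict_univ]
  set F : ℝ → ℝ := fun r => if r ≤ 1 then (β + 1) / Real.pi * (1 - r ^ 2) ^ β else 0 with hF
  have hnn : ∀ x : PP, 0 ≤ F ‖x‖ := by
    intro x
    simp only [hF]
    split_ifs with h
    · have : 0 ≤ 1 - ‖x‖ ^ 2 := by nlinarith [norm_nonneg x]
      positivity
    · exact le_rfl
  have hint : Integrable (fun x : PP => F ‖x‖) volume := by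
    have hsupp : Function.support (fun x : PP => F ‖x‖) ⊆ Metric.closedBall 0 1 := by
      intro x hx
      by_contra h
      simp at h
      exact hx (by simp only [hF]; rw [if_neg (by linarith)])
    rw [← integrableOn_iff_integrable_of_support_subset hsupp]
    refine Measure.integrableOn_of_bounded (M := (β + 1) / Real.pi) measure_closedBall_lt_top.ne
      (dens_meas β).aestronglyMeasurable (Filter.Eventually.of_forall fun x => ?_)
    rw [Real.norm_of_nonneg (hnn x)]
    simp only [hF]
    split_ifs with h
    · have h2 : (1 - ‖x‖ ^ 2) ^ β ≤ 1 :=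
        Real.rpow_le_one (by nlinarith [norm_nonneg x]) (by nlinarith [norm_nonneg x]) hβ
      have : 0 ≤ (β + 1) / Real.pi := by positivity
      nlinarith
    · positivity
  change ∫⁻ x : PP, ENNReal.ofReal (F ‖x‖) = 1
  rw [← ofReal_integral_eq_lintegral_ofReal hint (Filter.Eventually.of_forall hnn),
    integral_fun_norm_addHaar]
  have hball : (volume : Measure PP).real (Metric.ball 0 1) = Real.pi := by
    rw [measureReal_def, EuclideanSpace.volume_ball_fin_two]
    simp [Real.pi_pos.le]
  have hI : ∫ y in Set.Ioi (0:ℝ), y ^ (Module.finrank ℝ PP - 1) • F y = 1 / (2 * Real.pi) := by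
    have e1 : ∀ y : ℝ, y ∈ Set.Ioi (0:ℝ) → y ^ (Module.finrank ℝ PP - 1) • F y =
        (Set.Ioc (0:ℝ) 1).indicator (fun y => (β + 1) / Real.pi * (y * (1 - y ^ 2) ^ β)) y := by
      intro y hy
      have hy : 0 < y := hy
      simp only [hF, Set.indicator, Set.mem_Ioc, hy, true_and]
      split_ifs with h
      · simp
        try ring
      · simp
    rw [setIntegral_congr_fun measurableSet_Ioi e1, setIntegral_indicator measurableSet_Ioc]
    have : Set.Ioi (0:ℝ) ∩ Set.Ioc 0 1 = Set.Ioc 0 1 := by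
      ext; simp
    rw [this, ← intervalIntegral.integral_of_le zero_le_one, intervalIntegral.integral_const_mul]
    have hd : ∀ y ∈ Set.uIcc (0:ℝ) 1, HasDerivAt (fun y : ℝ => -(1 - y ^ 2) ^ (β + 1) / (2 * (β + 1)))
        (y * (1 - y ^ 2) ^ β) y := by
      intro y _
      have h1 : HasDerivAt (fun y : ℝ => 1 - y ^ 2) (-(2 * y)) y := by
        simpa using (hasDerivAt_pow 2 y).const_sub 1
      have h2 := ((h1.rpow_const (p := β + 1) (Or.inr (by linarith))).neg).div_const (2 * (β + 1))
      have : β + 1 ≠ 0 := by linarith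
      have e3 : -(-(2 * y) * (β + 1) * (1 - y ^ 2) ^ (β + 1 - 1)) / (2 * (β + 1)) =
          y * (1 - y ^ 2) ^ β := by
        rw [add_sub_cancel_right]
        field_simp
      rw [e3] at h2
      exact h2
    have hc : Continuous fun y : ℝ => y * (1 - y ^ 2) ^ β := by
      refine continuous_id.mul (Continuous.rpow_const (by fun_prop) fun _ => Or.inr hβ)
    rw [intervalIntegral.integral_eq_sub_of_hasDerivAt hd (hc.intervalIntegrable _ _)]
    have : β + 1 ≠ 0 := by linarith
    have hpi := Real.pi_ne_zero
    simp [Real.zero_rpow this]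
    field_simp
  rw [hI, hball]
  have hpi := Real.pi_ne_zero
  simp

lemma beta_inj {β : ℝ} [IsProbabilityMeasure (betaMeasure β)] (n : ℕ) :
    ∀ᵐ ω ∂(betaPi β n), Function.Injective ω := by
  have hna : ∀ x : PP, betaMeasure β {x} = 0 := fun x =>
    withDensity_absolutelyContinuous _ _ (measure_singleton x)
  have : ∀ i j : Fin n, i ≠ j → ∀ᵐ ω ∂(betaPi β n), ω i ≠ ω j := by
    intro i j hij
    obtain ⟨m, rfl⟩ : ∃ m, n = m + 1 := ⟨n - 1, by have := i.pos; omega⟩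
    have mp := (measurePreserving_piFinSuccAbove (fun _ : Fin (m+1) => betaMeasure β) i)
    obtain ⟨l, rfl⟩ := Fin.exists_succAbove_eq hij.symm
    have hS : MeasurableSet {z : PP × (Fin m → PP) | z.1 = z.2 l} :=
      measurableSet_eq_fun measurable_fst ((measurable_pi_apply l).comp measurable_snd)
    have h0 : ((betaMeasure β).prod (Measure.pi fun _ : Fin m => betaMeasure β))
        {z : PP × (Fin m → PP) | z.1 = z.2 l} = 0 := by
      rw [Measure.prod_apply_symm hS]
      refine lintegral_eq_zero_of_ae_eq_zero (Filter.Eventually.of_forall fun y => ?_)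
      exact hna (y l)
    have h1 := mp.measure_preimage hS.nullMeasurableSet
    rw [h0] at h1
    rw [ae_iff]
    refine measure_mono_null ?_ h1
    intro ω hω
    simp only [ne_eq, not_not, Set.mem_ofPred_eq] at hω
    exact hω
  have h2 : ∀ᵐ ω ∂(betaPi β n), ∀ i j : Fin n, i ≠ j → ω i ≠ ω j := by
    refine ae_all_iff.2 fun i => ae_all_iff.2 fun j => ?_
    by_cases hij : i = j
    · exact Filter.Eventually.of_forall fun ω h => absurd hij h
    · filter_upwards [this i j hij] with ω hω _ using hω
  filter_upwards [h2] with ω hω i j hij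
  by_contra h
  exact hω i j h hij

lemma beta_all_disc {β : ℝ} [IsProbabilityMeasure (betaMeasure β)] (n : ℕ) :
    ∀ᵐ ω ∂(betaPi β n), ∀ i, ‖ω i‖ ≤ 1 := by
  refine ae_all_iff.2 fun i => ?_
  exact (measurePreserving_eval (fun _ : Fin n => betaMeasure β) i).quasiMeasurePreserving.ae
    (beta_disc β)


lemma exists_net (M : ℕ) (hM : 0 < M) : ∃ V : Finset PP, V.card ≤ (2 * M + 1) ^ 2 ∧
    (∀ v ∈ V, ‖v‖ = 1) ∧ ∀ u : PP, ‖u‖ = 1 → ∃ v ∈ V, ‖u - v‖ ≤ 2 / M := by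
  classical
  have hM' : (0:ℝ) < M := by exact_mod_cast hM
  let K : PP → ℤ × ℤ := fun u => (⌊(M:ℝ) * u 0⌋, ⌊(M:ℝ) * u 1⌋)
  let P : Finset (ℤ × ℤ) := (Finset.Icc (-(M:ℤ)) M ×ˢ Finset.Icc (-(M:ℤ)) M)
  let c : ℤ × ℤ → PP := fun p => if h : ∃ u : PP, ‖u‖ = 1 ∧ K u = p then h.choose else 0
  have hc : ∀ u : PP, ‖u‖ = 1 → ‖c (K u)‖ = 1 ∧ K (c (K u)) = K u := by
    intro u hu
    have hex : ∃ u' : PP, ‖u'‖ = 1 ∧ K u' = K u := ⟨u, hu, rfl⟩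
    simp only [c, dif_pos hex]
    exact hex.choose_spec
  have hcoord : ∀ u : PP, ‖u‖ = 1 → ∀ i, |u i| ≤ 1 := by
    intro u hu i
    have := PiLp.norm_apply_le u i
    rw [hu] at this
    simpa using this
  have hfl : ∀ t : ℝ, |t| ≤ 1 → ⌊(M:ℝ) * t⌋ ∈ Finset.Icc (-(M:ℤ)) M := by
    intro t ht
    obtain ⟨h1, h2⟩ := abs_le.1 ht
    rw [Finset.mem_Icc]
    constructor
    · rw [Int.le_floor]; push_cast; nlinarith
    · have : (⌊(M:ℝ) * t⌋ : ℝ) ≤ M := (Int.floor_le _).trans (by nlinarith)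
      exact_mod_cast this
  refine ⟨(P.filter fun p => ∃ u : PP, ‖u‖ = 1 ∧ K u = p).image c, ?_, ?_, ?_⟩
  · refine Finset.card_image_le.trans ((Finset.card_filter_le _ _).trans (le_of_eq ?_))
    simp only [P, Finset.card_product, Int.card_Icc]
    have : ((M:ℤ) + 1 - -(M:ℤ)).toNat = 2 * M + 1 := by omega
    rw [this, sq]
  · intro v hv
    obtain ⟨p, hp, rfl⟩ := Finset.mem_image.1 hv
    obtain ⟨u, hu, rfl⟩ := (Finset.mem_filter.1 hp).2
    exact (hc u hu).1
  · intro u hu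
    refine ⟨c (K u), Finset.mem_image.2 ⟨K u, Finset.mem_filter.2 ⟨?_, u, hu, rfl⟩, rfl⟩, ?_⟩
    · exact Finset.mem_product.2 ⟨hfl _ (hcoord u hu 0), hfl _ (hcoord u hu 1)⟩
    · obtain ⟨h1, h2⟩ := hc u hu
      set v := c (K u)
      have k0 : ⌊(M:ℝ) * v 0⌋ = ⌊(M:ℝ) * u 0⌋ := congrArg Prod.fst h2
      have k1 : ⌊(M:ℝ) * v 1⌋ = ⌊(M:ℝ) * u 1⌋ := congrArg Prod.snd h2
      have key : ∀ s t : ℝ, ⌊(M:ℝ) * s⌋ = ⌊(M:ℝ) * t⌋ → (t - s) ^ 2 ≤ (1 / M) ^ 2 := by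
        intro s t hst
        have := Int.abs_sub_lt_one_of_floor_eq_floor hst
        rw [← mul_sub, abs_mul, abs_of_pos hM'] at this
        have h3 : |t - s| ≤ |1 / (M:ℝ)| := by
          rw [abs_of_pos (show 0 < 1 / (M:ℝ) by positivity), le_div_iff₀ hM', abs_sub_comm]; linarith
        exact sq_le_sq.2 h3
      have e : ‖u - v‖ ^ 2 ≤ (2 / M) ^ 2 := by
        rw [EuclideanSpace.norm_sq_eq, Fin.sum_univ_two]
        have a0 := key _ _ k0
        have a1 := key _ _ k1
        simp only [PiLp.sub_apply, Real.norm_eq_abs, sq_abs]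
        have : (2 / (M:ℝ)) ^ 2 = 4 * (1 / M) ^ 2 := by ring
        nlinarith [sq_nonneg (1 / (M:ℝ))]
      exact (sq_le_sq₀ (norm_nonneg _) (by positivity)).1 e

lemma bad_event (μ : Measure PP) [IsProbabilityMeasure μ] (n : ℕ) (h : ℝ) (M : ℕ) (hM : 0 < M)
    (hMh : 4 / (M:ℝ) ≤ h) (p : ℝ)
    (hp : ∀ v : PP, ‖v‖ = 1 → p ≤ μ.real {x | 1 - h / 2 ≤ inner ℝ v x}) :
    ∃ B : Set (Fin n → PP), MeasurableSet B ∧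
      (∀ ω, ω ∉ B → (∀ i, ‖ω i‖ ≤ 1) → Good h ω) ∧
      (Measure.pi fun _ : Fin n => μ).real B ≤
        (n:ℝ) * n * (2 * M + 1) ^ 2 * (1 - p) ^ (n - 2) := by
  classical
  obtain ⟨V, hV1, hV2, hV3⟩ := exists_net M hM
  let S : Fin n → Fin n → Finset (Fin n) := fun i k => Finset.univ \ {i, k}
  let Q : PP → Set PP := fun v => {x | inner ℝ v x < 1 - h / 2}
  have hQ : ∀ v, MeasurableSet (Q v) := fun v =>
    measurableSet_lt (by fun_prop) measurable_const
  have hB : ∀ i k v, MeasurableSet {ω : Fin n → PP | ∀ j ∈ S i k, ω j ∈ Q v} := by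
    intro i k v
    have : {ω : Fin n → PP | ∀ j ∈ S i k, ω j ∈ Q v} =
        ⋂ j ∈ S i k, (fun y : Fin n → PP => y j) ⁻¹' Q v := by
      ext; simp
    rw [this]
    exact Finset.measurableSet_biInter _ fun j _ => measurable_pi_apply j (hQ v)
  refine ⟨⋃ i : Fin n, ⋃ k : Fin n, ⋃ v ∈ V, {ω | ∀ j ∈ S i k, ω j ∈ Q v}, ?_, ?_, ?_⟩
  · exact MeasurableSet.iUnion fun i => MeasurableSet.iUnion fun k =>
      Finset.measurableSet_biUnion _ fun v _ => hB i k v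
  · intro ω hω hd i k u hu
    obtain ⟨v, hv, huv⟩ := hV3 u hu
    have h1 : ¬ ∀ j ∈ S i k, ω j ∈ Q v := fun hall => hω (by
      simp only [Set.mem_iUnion]
      exact ⟨i, k, v, hv, hall⟩)
    push Not at h1
    obtain ⟨j, hj, hjv⟩ := h1
    have hj' : j ≠ i ∧ j ≠ k := by simpa [S] using hj
    refine ⟨j, hj'.1, hj'.2, ?_⟩
    have hjv : 1 - h / 2 ≤ inner ℝ v (ω j) := by simpa [Q] using hjv
    have h2 : inner ℝ (v - u) (ω j) ≤ ‖v - u‖ * ‖ω j‖ := real_inner_le_norm _ _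
    rw [inner_sub_left, norm_sub_rev] at h2
    have h3 : ‖u - v‖ * ‖ω j‖ ≤ ‖u - v‖ := mul_le_of_le_one_right (norm_nonneg _) (hd j)
    have h4 : 2 / (M:ℝ) = (4 / M) / 2 := by ring
    linarith
  · have hterm : ∀ i k, ∀ v ∈ V, (Measure.pi fun _ : Fin n => μ).real
        {ω | ∀ j ∈ S i k, ω j ∈ Q v} ≤ (1 - p) ^ (n - 2) := by
      intro i k v hv
      rw [pi_all]
      have hc : n - 2 ≤ (S i k).card := by
        have h1 := Finset.le_card_sdiff ({i, k} : Finset (Fin n)) Finset.univ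
        have h2 := Finset.card_le_two (a := i) (b := k)
        simp at h1
        simp only [S]
        omega
      have hQp : μ.real (Q v) ≤ 1 - p := by
        have : (Q v) = {x | 1 - h / 2 ≤ inner ℝ v x}ᶜ := by
          ext; simp only [Q, Set.mem_ofPred_eq, Set.mem_compl_iff, not_le]
        rw [this, probReal_compl_eq_one_sub (measurableSet_le measurable_const (by fun_prop))]
        linarith [hp v (hV2 v hv)]
      exact (pow_le_pow_of_le_one measureReal_nonneg measureReal_le_one hc).trans
        (pow_le_pow_left₀ measureReal_nonneg hQp _)
    have hp1 : 0 ≤ (1 - p) ^ (n - 2) := by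
      refine pow_nonneg ?_ _
      have := hp (EuclideanSpace.single 0 1) (by simp)
      have h2 := measureReal_le_one (μ := μ) (s := {x | 1 - h / 2 ≤ inner ℝ (EuclideanSpace.single 0 1) x})
      linarith
    calc _ ≤ ∑ i : Fin n, ∑ k : Fin n, ∑ v ∈ V,
            (Measure.pi fun _ : Fin n => μ).real {ω | ∀ j ∈ S i k, ω j ∈ Q v} := by
          refine (measureReal_iUnion_fintype_le _).trans (Finset.sum_le_sum fun i _ => ?_)
          refine (measureReal_iUnion_fintype_le _).trans (Finset.sum_le_sum fun k _ => ?_)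
          exact measureReal_biUnion_finset_le _ _
      _ ≤ ∑ i : Fin n, ∑ k : Fin n, ∑ v ∈ V, (1 - p) ^ (n - 2) :=
          Finset.sum_le_sum fun i _ => Finset.sum_le_sum fun k _ => Finset.sum_le_sum fun v hv =>
            hterm i k v hv
      _ = n * n * V.card * (1 - p) ^ (n - 2) := by simp; ring
      _ ≤ _ := by
          have : (V.card : ℝ) ≤ (2 * M + 1) ^ 2 := by exact_mod_cast hV1
          gcongr

lemma var_bound {β : ℝ} (hβ : 0 ≤ β) (n : ℕ) (h : ℝ) (h0 : 0 < h) (h1 : h ≤ 1 / 6) (M : ℕ)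
    (hM : 0 < M) (hMh : 4 / (M:ℝ) ≤ h) (p a q : ℝ)
    (hp : ∀ v : PP, ‖v‖ = 1 → p ≤ (betaMeasure β).real {x | 1 - h / 2 ≤ inner ℝ v x})
    (ha : (betaMeasure β).real (ann h) ≤ a)
    (hq0 : 0 ≤ q) (hq : ∀ x ∈ ann h, (betaMeasure β).real {y | (x, y) ∈ nearR h} ≤ q) :
    varF0 β n ≤ n * (a * (2 + 2 * (n * q + (n * q) ^ 2)) +
      n ^ 2 * ((n:ℝ) * n * (2 * M + 1) ^ 2 * (1 - p) ^ (n - 2))) := by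
  have := beta_prob hβ
  have hP : IsProbabilityMeasure (betaPi β n) := by unfold betaPi; infer_instance
  obtain ⟨B, hB1, hB2, hB3⟩ := bad_event (betaMeasure β) n h M hM hMh p hp
  have hinj := beta_inj (β := β) n
  have hdisc := beta_all_disc (β := β) n
  have e1 : varF0 β n = ∫ ω, vc Finset.univ ω ^ 2 ∂betaPi β n -
      (∫ ω, vc Finset.univ ω ∂betaPi β n) ^ 2 := by
    unfold varF0 meanF0
    have hae : ∀ᵐ ω ∂betaPi β n, vertCount ω = vc Finset.univ ω := by
      filter_upwards [hinj] with ω hω using vc_eq_ncard ω hω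
    rw [integral_congr_ae hae, integral_congr_ae (g := fun ω => vc Finset.univ ω ^ 2)
      (by filter_upwards [hae] with ω hω; simp only [hω])]
  rw [e1]
  refine (efron_stein (betaMeasure β) n (vc Finset.univ) (vc_meas _) n (vc_abs _)
    (fun k => vc (Finset.univ.erase k)) (fun k => vc_meas _) (fun k => vc_abs _)
    (fun k ω x => vc_update k ω x)).trans ?_
  have hterm : ∀ k : Fin n, ∫ ω, (vc Finset.univ ω - vc (Finset.univ.erase k) ω) ^ 2
      ∂(Measure.pi fun _ => betaMeasure β) ≤ a * (2 + 2 * (n * q + (n * q) ^ 2)) +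
      n ^ 2 * ((n:ℝ) * n * (2 * M + 1) ^ 2 * (1 - p) ^ (n - 2)) := by
    intro k
    have i0 : ∀ {Z : Type} (S : Set Z) (z : Z), 0 ≤ S.indicator (fun _ => (1:ℝ)) z :=
      fun S z => Set.indicator_nonneg (fun _ _ => zero_le_one) z
    have i1 : ∀ {Z : Type} (S : Set Z) (z : Z), S.indicator (fun _ => (1:ℝ)) z ≤ 1 :=
      fun S z => Set.indicator_le_self' (fun _ _ => zero_le_one) z
    set Φ : (Fin n → PP) → ℝ := fun ω => (ann h).indicator (fun _ => (1:ℝ)) (ω k) *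
      (1 + ∑ i ∈ Finset.univ.erase k, (nearR h).indicator (fun _ => (1:ℝ)) (ω k, ω i)) ^ 2 with hΦ
    have hΦ0 : ∀ ω, 0 ≤ Φ ω := fun ω => mul_nonneg (i0 _ _) (sq_nonneg _)
    have hΦm : Measurable Φ := by
      refine Measurable.mul ((measurable_const.indicator (ann_meas h)).comp (measurable_pi_apply k)) ?_
      refine ((Finset.measurable_sum _ fun i _ => ?_).const_add _).pow_const _
      exact (measurable_const.indicator (nearR_meas h)).comp
        ((measurable_pi_apply k).prodMk (measurable_pi_apply i))
    have hΦb : ∀ ω, |Φ ω| ≤ 1 * (1 + ∑ i ∈ Finset.univ.erase k, (1:ℝ)) ^ 2 := by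
      intro ω
      have s0 := Finset.sum_nonneg (s := Finset.univ.erase k)
        (f := fun i => (nearR h).indicator (fun _ => (1:ℝ)) (ω k, ω i)) fun i _ => i0 _ _
      have s1 := Finset.sum_le_sum (s := Finset.univ.erase k)
        (f := fun i => (nearR h).indicator (fun _ => (1:ℝ)) (ω k, ω i)) (g := fun _ => 1)
        fun i _ => i1 _ _
      rw [abs_of_nonneg (hΦ0 ω)]
      exact mul_le_mul (i1 _ _) (pow_le_pow_left₀ (by linarith) (by linarith) 2) (sq_nonneg _)
        zero_le_one
    have iΦ : Integrable Φ (Measure.pi fun _ : Fin n => betaMeasure β) := es_int hΦm hΦb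
    have iB : Integrable (B.indicator (fun _ => (n:ℝ) ^ 2))
        (Measure.pi fun _ : Fin n => betaMeasure β) := (integrable_const _).indicator hB1
    have hpt : ∀ᵐ ω ∂(Measure.pi fun _ : Fin n => betaMeasure β),
        (vc Finset.univ ω - vc (Finset.univ.erase k) ω) ^ 2 ≤
          Φ ω + B.indicator (fun _ => (n:ℝ) ^ 2) ω := by
      have hinj' : ∀ᵐ ω ∂(Measure.pi fun _ : Fin n => betaMeasure β), Function.Injective ω := hinj
      have hdisc' : ∀ᵐ ω ∂(Measure.pi fun _ : Fin n => betaMeasure β), ∀ i, ‖ω i‖ ≤ 1 := hdisc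
      filter_upwards [hinj', hdisc'] with ω hω1 hω2
      by_cases hωB : ω ∈ B
      · rw [Set.indicator_of_mem hωB]
        have a1 := vc_nonneg Finset.univ ω
        have a2 := vc_le Finset.univ ω
        have a3 := vc_nonneg (Finset.univ.erase k) ω
        have a4 := vc_le (Finset.univ.erase k) ω
        have : (vc Finset.univ ω - vc (Finset.univ.erase k) ω) ^ 2 ≤ (n:ℝ) ^ 2 :=
          sq_le_sq' (by linarith) (by linarith)
        linarith [hΦ0 ω]
      · rw [Set.indicator_of_notMem hωB, add_zero]
        exact vc_diff (by linarith) ω hω1 hω2 (hB2 ω hωB hω2) k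
    refine (integral_mono_of_nonneg (Filter.Eventually.of_forall fun ω => sq_nonneg _)
      (iΦ.add iB) hpt).trans ?_
    have e2 := integral_add iΦ iB
    simp only [Pi.add_apply]
    rw [e2, integral_indicator_const _ hB1, smul_eq_mul, mul_comm _ ((n:ℝ) ^ 2)]
    refine add_le_add ?_ (mul_le_mul_of_nonneg_left hB3 (by positivity))
    refine (near_count (betaMeasure β) n k (ann h) (ann_meas h) (nearR h) (nearR_meas h) q hq0
      hq).trans ?_
    exact mul_le_mul_of_nonneg_right ha (by positivity)
  refine (Finset.sum_le_sum fun k _ => hterm k).trans (le_of_eq ?_)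
  rw [Finset.sum_const, Finset.card_univ, Fintype.card_fin, nsmul_eq_mul]

set_option maxHeartbeats 4000000 in
/-- upper bound for the variance of the vertex count. For `d ≥ 4` and
`β = d/2 - 2`, there are `c > 0` and `N` such that
`Var(f₀(Qₙ)) ≤ c·(log n)^{3 - 1/(d-1)}·n^{1/(d-1)}` for all `n ≥ N`. -/
theorem main_aux_bound (d : ℕ) (hd : 4 ≤ d)
    (β : ℝ) (hβ : β = (d : ℝ) / 2 - 2) :
    ∃ c : ℝ, 0 < c ∧ ∃ N : ℕ, ∀ n : ℕ, N ≤ n →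
      varF0 β n ≤
        c * Real.log n ^ (3 - 1 / ((d : ℝ) - 1)) * (n : ℝ) ^ (1 / ((d : ℝ) - 1)) := by
  set D : ℝ := (d:ℝ) - 1 with hD
  have hd' : (4:ℝ) ≤ d := by exact_mod_cast hd
  have hD3 : 3 ≤ D := by linarith
  have hD0 : 0 < D := by linarith
  have hβ0 : 0 ≤ β := by linarith
  have hpi := Real.pi_pos
  have hB : 0 < (β + 1) / Real.pi := by positivity
  -- constants
  set c1 : ℝ := (β + 1) / Real.pi * (1 / 4) ^ β * (1 / 4) * Real.sqrt (1 / 2) with hc1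
  have hc1p : 0 < c1 := by positivity
  set K : ℝ := max (14 / c1) 1 with hK
  have hK1 : 1 ≤ K := le_max_right _ _
  have hK14 : 14 ≤ c1 * K := by
    have : 14 / c1 ≤ K := le_max_left _ _
    rw [div_le_iff₀ hc1p] at this
    linarith
  set C2 : ℝ := (β + 1) / Real.pi * 2 ^ β * 48 * K with hC2
  have hC2p : 0 < C2 := by positivity
  set Ca : ℝ := (β + 1) / Real.pi * 2 ^ β * (2 * Real.pi) with hCa
  have hCap : 0 < Ca := by positivity
  refine ⟨Ca * K ^ (1 - 1 / D) * (2 + 2 * C2 + 2 * C2 ^ 2) + 81, by positivity, ?_⟩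
  -- eventually h is small
  have hlim : Filter.Tendsto (fun n : ℕ => K * (Real.log n / n)) Filter.atTop (nhds 0) := by
    have h1 : Filter.Tendsto (fun x : ℝ => Real.log x / x) Filter.atTop (nhds 0) := by
      simpa using Real.isLittleO_log_id_atTop.tendsto_div_nhds_zero
    simpa using (h1.comp tendsto_natCast_atTop_atTop).const_mul K
  have hev : ∀ᶠ n : ℕ in Filter.atTop, K * (Real.log n / n) < (1 / 6) ^ (D / 2) :=
    hlim.eventually_lt_const (by positivity)
  obtain ⟨N, hN⟩ := Filter.eventually_atTop.1 hev
  refine ⟨max N 4, fun n hn => ?_⟩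
  have hnN := hN n (le_of_max_le_left hn)
  have hn4 : 4 ≤ n := le_of_max_le_right hn
  have hn4' : (4:ℝ) ≤ n := by exact_mod_cast hn4
  have hn0 : (0:ℝ) < n := by linarith
  set L : ℝ := Real.log n with hL
  have hL1 : 1 ≤ L := by
    rw [hL, Real.le_log_iff_exp_le hn0]
    linarith [Real.exp_one_lt_d9]
  set t : ℝ := K * (L / n) with ht
  have ht0 : 0 < t := by positivity
  set h : ℝ := t ^ (2 / D) with hh
  have h0 : 0 < h := by positivity
  have hpow : h ^ (D / 2) = t := by
    rw [hh, ← Real.rpow_mul ht0.le]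
    have : 2 / D * (D / 2) = 1 := by field_simp
    rw [this, Real.rpow_one]
  have h16 : h ≤ 1 / 6 := by
    by_contra hlt
    push Not at hlt
    have := Real.rpow_lt_rpow (by norm_num) hlt (show 0 < D / 2 by positivity)
    rw [hpow] at this
    linarith
  have ht1 : t ≤ 1 := by
    rw [← hpow]; exact Real.rpow_le_one h0.le (by linarith) (by positivity)
  have hth : t ≤ h := by
    have := Real.rpow_le_rpow_of_exponent_ge ht0 ht1 (show 2 / D ≤ 1 by
      rw [div_le_one hD0]; linarith)
    rwa [Real.rpow_one] at this
  have hs : h ^ β * h * Real.sqrt h = t := by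
    rw [← hpow, Real.sqrt_eq_rpow]
    nth_rewrite 2 [← Real.rpow_one h]
    rw [← Real.rpow_add h0, ← Real.rpow_add h0]
    congr 1; rw [hβ, hD]; ring
  have hs2 : h ^ β * h = t ^ (1 - 1 / D) := by
    nth_rewrite 2 [← Real.rpow_one h]
    rw [← Real.rpow_add h0, hh, ← Real.rpow_mul ht0.le]
    congr 1
    have : β + 1 = (D - 1) / 2 := by rw [hβ, hD]; ring
    rw [this]; field_simp
  have hnt : n * t = K * L := by rw [ht]; field_simp
  have := beta_prob hβ0
  have hvar := var_bound hβ0 n h h0 h16 (4 * n) (by omega) (by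
      push_cast
      have : 4 / (4 * (n:ℝ)) = 1 / n := by field_simp
      rw [this]
      refine le_trans ?_ hth
      rw [ht, ← mul_div_assoc]
      have : 1 ≤ K * L := by nlinarith
      gcongr) (14 * L / n) (Ca * t ^ (1 - 1 / D)) (C2 / K * t) (by
      intro v hv
      refine le_trans ?_ (beta_lower hβ0 (half_pos h0) (by linarith) v hv)
      have e1 : (β + 1) / Real.pi * (h / 2 / 2) ^ β * (h / 2 / 2 * Real.sqrt (h / 2)) = c1 * t := by
        have e2 : h / 2 / 2 = (1 / 4) * h := by ring
        have e3 : h / 2 = (1 / 2) * h := by ring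
        rw [e2, e3, Real.mul_rpow (by norm_num) h0.le, Real.sqrt_mul (by norm_num), hc1, ← hs]
        ring
      rw [e1, ht, ← mul_assoc, mul_div_assoc]
      gcongr) (by
      refine (ann_upper hβ0 h0 (by linarith)).trans (le_of_eq ?_)
      rw [← hs2, Real.mul_rpow (by norm_num) h0.le, hCa]; ring) (by positivity) (by
      intro x hx
      refine (near_upper hβ0 h0 h16 x hx).trans (le_of_eq ?_)
      have : C2 / K = (β + 1) / Real.pi * 2 ^ β * 48 := by rw [hC2]; field_simp
      rw [this, ← hs, Real.mul_rpow (by norm_num) h0.le]; ring)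
  refine hvar.trans ?_
  have hnq : n * (C2 / K * t) = C2 * L := by
    have : n * (C2 / K * t) = C2 / K * (n * t) := by ring
    rw [this, hnt]; field_simp
  rw [hnq]
  -- the bad term
  have hp1 : 0 ≤ 1 - 14 * L / n := by
    have h1 : 14 * L / n ≤ c1 * t := by
      rw [ht, ← mul_assoc, mul_div_assoc]; gcongr
    have h2 := beta_lower hβ0 (half_pos h0) (by linarith) (EuclideanSpace.single 0 1) (by simp)
    have e1 : (β + 1) / Real.pi * (h / 2 / 2) ^ β * (h / 2 / 2 * Real.sqrt (h / 2)) = c1 * t := by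
      have e2 : h / 2 / 2 = (1 / 4) * h := by ring
      have e3 : h / 2 = (1 / 2) * h := by ring
      rw [e2, e3, Real.mul_rpow (by norm_num) h0.le, Real.sqrt_mul (by norm_num), hc1, ← hs]
      ring
    rw [e1] at h2
    have h3 := h2.trans measureReal_le_one
    linarith
  have hbad : (1 - 14 * L / n) ^ (n - 2) ≤ 1 / (n:ℝ) ^ 7 := by
    have e1 : 1 - 14 * L / n ≤ Real.exp (-(14 * L / n)) := by
      have := Real.add_one_le_exp (-(14 * L / n)); linarith
    refine (pow_le_pow_left₀ hp1 e1 _).trans ?_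
    rw [← Real.exp_nat_mul]
    have e2 : 1 / (n:ℝ) ^ 7 = Real.exp (-(7 * L)) := by
      rw [Real.exp_neg, one_div]
      congr 1
      have : 7 * L = ((7:ℕ):ℝ) * L := by norm_num
      rw [this, Real.exp_nat_mul, hL, Real.exp_log hn0]
    rw [e2]
    refine Real.exp_le_exp.2 ?_
    rw [Nat.cast_sub (by omega)]
    push_cast
    have : ((n:ℝ) - 2) * -(14 * L / n) = -(7 * L) - 7 * L * (n - 4) / n := by
      field_simp; ring
    rw [this]
    have : 0 ≤ 7 * L * ((n:ℝ) - 4) / n := by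
      have : 0 ≤ (n:ℝ) - 4 := by linarith
      positivity
    linarith
  have hbad2 : (n:ℝ) * (n ^ 2 * ((n:ℝ) * n * (2 * ((4 * n : ℕ) : ℝ) + 1) ^ 2 *
      (1 - 14 * L / n) ^ (n - 2))) ≤ 81 := by
    have e1 : (2 * ((4 * n : ℕ) : ℝ) + 1) ^ 2 ≤ (9 * n) ^ 2 := by
      push_cast
      refine pow_le_pow_left₀ (by positivity) (by linarith) 2
    calc _ ≤ (n:ℝ) * (n ^ 2 * ((n:ℝ) * n * (9 * n) ^ 2 * (1 / (n:ℝ) ^ 7))) := by gcongr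
      _ = 81 := by field_simp; norm_num
  have hL3 : 1 ≤ L ^ (3 - 1 / D) := by
    refine Real.one_le_rpow hL1 ?_
    have : 1 / D ≤ 1 := by rw [div_le_one hD0]; linarith
    linarith
  have hn3 : 1 ≤ (n:ℝ) ^ (1 / D) := Real.one_le_rpow (by linarith) (by positivity)
  have hmain : n * (Ca * t ^ (1 - 1 / D)) * L ^ 2 =
      Ca * K ^ (1 - 1 / D) * (L ^ (3 - 1 / D) * (n:ℝ) ^ (1 / D)) := by
    have e1 : L ^ (3 - 1 / D) = L ^ (1 - 1 / D) * L ^ 2 := by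
      rw [← Real.rpow_natCast L 2, ← Real.rpow_add (by linarith)]
      congr 1; push_cast; ring
    have e2 : (n:ℝ) ^ (1 / D) = n / (n:ℝ) ^ (1 - 1 / D) := by
      nth_rewrite 2 [← Real.rpow_one (n:ℝ)]
      rw [← Real.rpow_sub hn0]; congr 1; ring
    rw [e1, e2, ht, Real.mul_rpow (by positivity) (by positivity),
      Real.div_rpow (by positivity) (by positivity)]
    ring
  have hquad : 2 + 2 * (C2 * L + (C2 * L) ^ 2) ≤ (2 + 2 * C2 + 2 * C2 ^ 2) * L ^ 2 := by
    have e1 : L ≤ L ^ 2 := by nlinarith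
    have e2 : C2 * L ≤ C2 * L ^ 2 := by gcongr
    nlinarith
  set W : ℝ := L ^ (3 - 1 / D) * (n:ℝ) ^ (1 / D) with hW
  have hW1 : 1 ≤ W := by nlinarith
  have hA0 : 0 ≤ n * (Ca * t ^ (1 - 1 / D)) := by positivity
  have hfin : n * (Ca * t ^ (1 - 1 / D)) * (2 + 2 * (C2 * L + (C2 * L) ^ 2)) ≤
      Ca * K ^ (1 - 1 / D) * (2 + 2 * C2 + 2 * C2 ^ 2) * W := by
    calc _ ≤ n * (Ca * t ^ (1 - 1 / D)) * ((2 + 2 * C2 + 2 * C2 ^ 2) * L ^ 2) := by gcongr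
      _ = (2 + 2 * C2 + 2 * C2 ^ 2) * (n * (Ca * t ^ (1 - 1 / D)) * L ^ 2) := by ring
      _ = _ := by rw [hmain]; ring
  rw [mul_assoc _ (L ^ (3 - 1 / D)), ← hW, mul_add, ← mul_assoc (n:ℝ), add_mul _ 81 W]
  linarith

/-- upper bound for the variance of the vertex count. For `d ≥ 4` and
`β = d/2 - 2`, there are `c > 0` and `N` such that
`Var(f₀(Qₙ)) ≤ c·(log n)^{3 - 1/(d-1)}·n^{1/(d-1)}` for all `n ≥ N`. -/
theorem variance_vertex_count_upper (d : ℕ) (hd : 4 ≤ d)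
    (β : ℝ) (hβ : β = (d : ℝ) / 2 - 2) :
    ∃ c : ℝ, 0 < c ∧ ∃ N : ℕ, ∀ n : ℕ, N ≤ n →
      varF0 β n ≤
        c * Real.log n ^ (3 - 1 / ((d : ℝ) - 1)) * (n : ℝ) ^ (1 / ((d : ℝ) - 1)) := by
  exact main_aux_bound d hd β hβ
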